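/- arXiv:math/0612673 — 2 statements merged into one kernel-verified Lean document; each statement's English description precedes it below -/
import Mathlib

section
/- (Key lemma for standard metrics.) Let 𝕂 ∈ {ℝ,ℂ}, F a 𝕂-vector space, (wₙ)_{n≥1} a monotonically decreasing sequence of positive real numbers with wₙ → 0, and (pₙ)_{n≥1} a sequence of seminorms on F. Define ‖x‖ := sup_{n≥1} wₙ·pₙ(x)/(1+pₙ(x)) for x ∈ F (a finite supremum, since each term is at most w₁). Let x, y ∈ F be such that pₖ(x) > 0 for some k and pₖ(y) > 0 for some k, and let n be the minimal index with pₙ(x) > 0 and m the minimal index with pₘ(y) > 0. Then ‖t·x‖ > 0 for every t ∈ 𝕂 with t ≠ 0, and sup_{t ∈ 𝕂, t ≠ 0} ‖t·y‖ / ‖t·x‖ ≥ wₘ/wₙ. -/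
open Filter Topology

/-!
The F-norm of `t • x` never exceeds the weight `w n`: every term lies below its weight, and the
terms of larger weight belong to seminorms vanishing at `x`. The F-norm of `t • y` is at least its
`m`-th term, and this tends to `w m` as `‖t‖ → ∞`. Hence every upper bound of the ratios is at least
the limit `w m / w n`.
-/

lemma div_one_add_self_le_one {a : ℝ} (ha : 0 ≤ a) : a / (1 + a) ≤ 1 :=
  div_le_one_of_le₀ (by linarith) (by linarith)

lemma tendsto_div_one_add_self_atTop : Tendsto (fun a : ℝ ↦ a / (1 + a)) atTop (𝓝 1) := by
  have h_inv : Tendsto (fun a : ℝ ↦ (1 + a)⁻¹) atTop (𝓝 0) :=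
    tendsto_inv_atTop_zero.comp (tendsto_atTop_add_const_left _ 1 tendsto_id)
  have h_sub : Tendsto (fun a : ℝ ↦ 1 - (1 + a)⁻¹) atTop (𝓝 1) := by
    simpa only [sub_zero] using h_inv.const_sub 1
  refine h_sub.congr' ?_
  filter_upwards [eventually_ge_atTop 0] with a ha
  field_simp
  ring

section SeminormedRing

variable {ι 𝕜 F : Type*} [SeminormedRing 𝕜] [AddGroup F] [SMul 𝕜 F]
  {w : ι → ℝ} {p : ι → Seminorm 𝕜 F} {z : F}

/-- The F-norm `‖z‖ = supₖ wₖ pₖ(z) / (1 + pₖ(z))` of a family of seminorms `p` with weights `w`;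
the standard metric is `‖x - z‖`. The supremum is taken in `ℝ`, so it has its usual meaning only
when the terms are bounded above, for instance for bounded nonnegative weights. -/
noncomputable def standardFNorm (w : ι → ℝ) (p : ι → Seminorm 𝕜 F) (z : F) : ℝ :=
  ⨆ k, w k * (p k z / (1 + p k z))

lemma standardFNorm_nonneg (hw : ∀ k, 0 ≤ w k) : 0 ≤ standardFNorm w p z :=
  Real.iSup_nonneg fun k ↦ mul_nonneg (hw k) (by positivity)

lemma standardFNorm_le {a : ℝ} (ha : 0 ≤ a) (h : ∀ k, p k z ≠ 0 → w k ≤ a) :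
    standardFNorm w p z ≤ a := by
  refine Real.iSup_le (fun k ↦ ?_) ha
  by_cases hk : p k z = 0
  · simpa [hk] using ha
  · calc w k * (p k z / (1 + p k z))
        ≤ a * (p k z / (1 + p k z)) :=
          mul_le_mul_of_nonneg_right (h k hk) (by positivity)
      _ ≤ a := mul_le_of_le_one_right ha (div_one_add_self_le_one (apply_nonneg _ _))

lemma le_standardFNorm (hw : ∀ k, 0 ≤ w k) (hw_bdd : BddAbove (Set.range w)) (k : ι) :
    w k * (p k z / (1 + p k z)) ≤ standardFNorm w p z :=
  le_ciSup (hw_bdd.range_mono _ fun j ↦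
    mul_le_of_le_one_right (hw j) (div_one_add_self_le_one (apply_nonneg _ _))) k

lemma standardFNorm_pos (hw : ∀ k, 0 ≤ w k) (hw_bdd : BddAbove (Set.range w)) {k : ι}
    (hwk : 0 < w k) (hk : 0 < p k z) : 0 < standardFNorm w p z :=
  lt_of_lt_of_le (by positivity) (le_standardFNorm hw hw_bdd k)

lemma standardFNorm_smul_le (t : 𝕜) {a : ℝ} (ha : 0 ≤ a) (h : ∀ k, p k z ≠ 0 → w k ≤ a) :
    standardFNorm w p (t • z) ≤ a :=
  standardFNorm_le ha fun k hk ↦ h k <| right_ne_zero_of_mul <| by rwa [← map_smul_eq_mul]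

lemma tendsto_seminorm_smul_cobounded {q : Seminorm 𝕜 F} (hz : 0 < q z) :
    Tendsto (fun t : 𝕜 ↦ q (t • z)) (Bornology.cobounded 𝕜) atTop := by
  simpa only [map_smul_eq_mul] using tendsto_norm_cobounded_atTop.atTop_mul_const hz

end SeminormedRing

section NontriviallyNormedField

variable {ι 𝕜 F : Type*} [NontriviallyNormedField 𝕜] [AddGroup F] [SMul 𝕜 F]
  {w : ι → ℝ} {p : ι → Seminorm 𝕜 F} {x y : F} {n m : ι}

theorem stmt11_general (hw : ∀ k, 0 ≤ w k) (hw_bdd : BddAbove (Set.range w)) (hwn : 0 < w n)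
    (hn : 0 < p n x) (hn_max : ∀ k, p k x ≠ 0 → w k ≤ w n) (hm : 0 < p m y) :
    (∀ t : 𝕜, t ≠ 0 → 0 < standardFNorm w p (t • x)) ∧
    ∀ c : ℝ, (∀ t : 𝕜, t ≠ 0 → standardFNorm w p (t • y) / standardFNorm w p (t • x) ≤ c) →
      w m / w n ≤ c := by
  have hpos (t : 𝕜) (ht : t ≠ 0) : 0 < standardFNorm w p (t • x) := by
    refine standardFNorm_pos hw hw_bdd hwn ?_
    rw [map_smul_eq_mul]
    positivity
  refine ⟨hpos, fun c hc ↦ ?_⟩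
  have hlim : Tendsto (fun t : 𝕜 ↦ w m * (p m (t • y) / (1 + p m (t • y))) / w n)
      (Bornology.cobounded 𝕜) (𝓝 (w m / w n)) := by
    simpa only [mul_one, Function.comp_apply] using ((tendsto_div_one_add_self_atTop.comp
      (tendsto_seminorm_smul_cobounded hm)).const_mul (w m)).div_const (w n)
  refine le_of_tendsto hlim ?_
  filter_upwards [Bornology.eventually_ne_cobounded (0 : 𝕜)] with t ht
  calc w m * (p m (t • y) / (1 + p m (t • y))) / w n
      ≤ standardFNorm w p (t • y) / standardFNorm w p (t • x) :=
        div_le_div₀ (standardFNorm_nonneg hw) (le_standardFNorm hw hw_bdd m) (hpos t ht)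
          (standardFNorm_smul_le t hwn.le hn_max)
    _ ≤ c := hc t ht

end NontriviallyNormedField

/-- Key lemma for standard metrics.
Let `F` be a `𝕜`-vector space, `(wₙ)` a decreasing sequence of positive reals tending
to `0`, and `(pₙ)` seminorms on `F`.  Define `‖x‖ := ⨆ n, wₙ·pₙ(x)/(1+pₙ(x))`.
If `n` is the minimal index with `pₙ(x) > 0` and `m` the minimal index with
`pₘ(y) > 0`, then `‖t•x‖ > 0` for all `t ≠ 0`, and
`sup_{t ≠ 0} ‖t•y‖/‖t•x‖ ≥ wₘ/wₙ` (every upper bound of the ratios is `≥ wₘ/wₙ`). -/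
theorem stmt11
    {𝕜 : Type*} [RCLike 𝕜] {F : Type*} [AddCommGroup F] [Module 𝕜 F]
    (w : ℕ → ℝ) (hw_pos : ∀ n, 0 < w n) (hw_anti : Antitone w)
    (hw_lim : Tendsto w atTop (𝓝 0))
    (p : ℕ → Seminorm 𝕜 F)
    (x y : F) (n m : ℕ)
    (hn : 0 < p n x) (hn' : ∀ k < n, p k x = 0)
    (hm : 0 < p m y) (hm' : ∀ k < m, p k y = 0) :
    (∀ t : 𝕜, t ≠ 0 → 0 < ⨆ k : ℕ, w k * (p k (t • x) / (1 + p k (t • x)))) ∧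
    ∀ c : ℝ,
      (∀ t : 𝕜, t ≠ 0 →
        (⨆ k : ℕ, w k * (p k (t • y) / (1 + p k (t • y)))) /
          (⨆ k : ℕ, w k * (p k (t • x) / (1 + p k (t • x)))) ≤ c) →
      w m / w n ≤ c :=
  stmt11_general (fun k ↦ (hw_pos k).le) hw_lim.bddAbove_range (hw_pos n) hn
    (fun k hk ↦ hw_anti (not_lt.mp (mt (hn' k) hk))) hm
end

section
/- (Linear contractions of ℝ^ℕ shift the canonical filtration.) Fix a ∈ (0,1) and equip the space ℝ^ℕ of real sequences x = (x₁, x₂, …) with ‖x‖_d := sup_{n≥1} aⁿ·|xₙ|/(1+|xₙ|) and the translation-invariant metric d(x,y) := ‖x−y‖_d. For n ≥ 1 let Fₙ := { x ∈ ℝ^ℕ : xₘ = 0 for all m < n }. Let A : ℝ^ℕ → ℝ^ℕ be a linear map with ‖A‖_{d,d} := sup_{x ≠ 0} ‖A x‖_d / ‖x‖_d < ∞. If ‖A‖_{d,d} < 1, then A(Fₖ) ⊆ F_{k+1} for every k ≥ 1; more generally, for any integer ℓ ≥ 1 with ‖A‖_{d,d} < a^{ℓ−1}, one has A(Fₖ)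 ⊆ F_{k+ℓ} for every k ≥ 1. -/
open Set

/-!
As `n → ∞`, `‖n • y‖_d` tends to the supremum of the weights on the support of `y`.  Evaluating
`‖A (n • x)‖_d ≤ C ‖n • x‖_d` in this limit compares weights: if `x` is supported on indices of
weight at most `c`, then `A x` is supported on indices of weight at most `C c`.  For the weights
`a ^ (n + 1)` this is a shift of the index.
-/

section WeightedSup

open Filter Topology

variable {ι κ E F : Type*} [SeminormedAddCommGroup E] [NormedAddCommGroup F] [NormedSpace ℝ F]

/-- The functional `‖x‖_d` for an arbitrary weight `w`; the metric `d` of the theorem has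
`w n = a ^ (n + 1)`, the exponent being shifted because sequences are indexed from `0`.
An unbounded supremum takes the junk value `0`. -/
noncomputable def weightedSup (w : ι → ℝ) (x : ι → E) : ℝ :=
  ⨆ i, w i * (‖x i‖ / (1 + ‖x i‖))

theorem norm_div_one_add_norm_le_one (y : E) : ‖y‖ / (1 + ‖y‖) ≤ 1 :=
  div_le_one_of_le₀ (by linarith) (by positivity)

theorem tendsto_div_one_add_atTop : Tendsto (fun t : ℝ => t / (1 + t)) atTop (𝓝 1) := by
  have h_inv : Tendsto (fun t : ℝ => (1 + t)⁻¹) atTop (𝓝 0) :=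
    tendsto_inv_atTop_zero.comp (tendsto_atTop_add_const_left atTop 1 tendsto_id)
  have h_sub : Tendsto (fun t : ℝ => 1 - (1 + t)⁻¹) atTop (𝓝 1) := by
    simpa only [sub_zero] using h_inv.const_sub 1
  refine h_sub.congr' ?_
  filter_upwards [eventually_gt_atTop 0] with t ht
  field_simp
  ring

theorem tendsto_norm_nsmul_atTop {y : F} (hy : y ≠ 0) :
    Tendsto (fun n : ℕ => ‖n • y‖) atTop atTop := by
  simpa only [RCLike.norm_nsmul ℝ, nsmul_eq_mul] using
    tendsto_natCast_atTop_atTop.atTop_mul_const (norm_pos_iff.mpr hy)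

theorem weightedSup_nonneg {w : ι → ℝ} (hw : ∀ i, 0 ≤ w i) (x : ι → E) :
    0 ≤ weightedSup w x :=
  Real.iSup_nonneg fun i => mul_nonneg (hw i) (by positivity)

theorem le_weightedSup {w : ι → ℝ} (hw : BddAbove (range w)) (x : ι → E) (i : ι) :
    w i * (‖x i‖ / (1 + ‖x i‖)) ≤ weightedSup w x := by
  obtain ⟨B, hB⟩ := hw
  refine le_ciSup (f := fun j => w j * (‖x j‖ / (1 + ‖x j‖))) ⟨max B 0 * 1, ?_⟩ i
  rintro _ ⟨j, rfl⟩
  exact mul_le_mul (le_max_of_le_left (hB (mem_range_self j))) (norm_div_one_add_norm_le_one _)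
    (by positivity) (le_max_right B 0)

theorem weightedSup_le {w : ι → ℝ} {x : ι → E} {c : ℝ} (hc : 0 ≤ c)
    (hx : ∀ i, x i ≠ 0 → w i ≤ c) : weightedSup w x ≤ c := by
  refine Real.iSup_le (fun i => ?_) hc
  by_cases hi : x i = 0
  · simpa only [hi, norm_zero, zero_div, mul_zero] using hc
  · calc
      w i * (‖x i‖ / (1 + ‖x i‖)) ≤ c * 1 :=
        mul_le_mul (hx i hi) (norm_div_one_add_norm_le_one _) (by positivity) hc
      _ = c := mul_one c

theorem weight_le_of_weightedSup_nsmul_le {w : ι → ℝ} (hw : BddAbove (range w)) {y : ι → F}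
    {c : ℝ} (hy : ∀ n : ℕ, weightedSup w (n • y) ≤ c) {i : ι} (hi : y i ≠ 0) : w i ≤ c := by
  have h_lim : Tendsto (fun n : ℕ => w i * (‖n • y i‖ / (1 + ‖n • y i‖))) atTop (𝓝 (w i)) := by
    simpa only [Function.comp_apply, mul_one] using
      (tendsto_div_one_add_atTop.comp (tendsto_norm_nsmul_atTop hi)).const_mul (w i)
  exact le_of_tendsto' h_lim fun n => (le_weightedSup hw (n • y) i).trans (hy n)

theorem weight_le_mul_of_weightedSup_map_le {v : ι → ℝ} {w : κ → ℝ} (hw : BddAbove (range w))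
    {A : (ι → E) → (κ → F)} (hA : ∀ (n : ℕ) x, A (n • x) = n • A x) {C : ℝ} (hC₀ : 0 ≤ C)
    (hC : ∀ x, weightedSup w (A x) ≤ C * weightedSup v x) {c : ℝ} (hc : 0 ≤ c) {x : ι → E}
    (hx : ∀ j, x j ≠ 0 → v j ≤ c) {i : κ} (hi : A x i ≠ 0) : w i ≤ C * c := by
  refine weight_le_of_weightedSup_nsmul_le hw (fun n => ?_) hi
  have h_supp : ∀ j, (n • x) j ≠ 0 → v j ≤ c := fun j hj =>
    hx j fun hj₀ => hj (by rw [Pi.smul_apply, hj₀, smul_zero])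
  calc
    weightedSup w (n • A x) = weightedSup w (A (n • x)) := by rw [hA]
    _ ≤ C * weightedSup v (n • x) := hC _
    _ ≤ C * c := mul_le_mul_of_nonneg_left (weightedSup_le hc h_supp) hC₀

theorem stmt12_general {a : ℝ} (ha₀ : 0 < a) (ha₁ : a ≤ 1) {A : (ℕ → E) → (ℕ → F)}
    (hA : ∀ (n : ℕ) x, A (n • x) = n • A x) {C : ℝ}
    (hC : ∀ x, weightedSup (fun n => a ^ (n + 1)) (A x) ≤
      C * weightedSup (fun n => a ^ (n + 1)) x)
    {m : ℕ} (hCm : C < a ^ m) {k : ℕ} {x : ℕ → E} (hx : ∀ i < k, x i = 0) :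
    ∀ i < k + (m + 1), A x i = 0 := by
  intro i hi
  by_contra h_ne
  have h_bdd : BddAbove (range fun n : ℕ => a ^ (n + 1)) :=
    ⟨1, forall_mem_range.mpr fun n => pow_le_one₀ ha₀.le ha₁⟩
  have h_contr : ∀ z, weightedSup (fun n => a ^ (n + 1)) (A z) ≤
      max C 0 * weightedSup (fun n => a ^ (n + 1)) z := fun z =>
    (hC z).trans (mul_le_mul_of_nonneg_right (le_max_left C 0)
      (weightedSup_nonneg (fun n => by positivity) z))
  have h_supp : ∀ j, x j ≠ 0 → a ^ (j + 1) ≤ a ^ (k + 1) := fun j hj =>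
    have hkj : k ≤ j := not_lt.mp fun h => hj (hx j h)
    pow_le_pow_of_le_one ha₀.le ha₁ (by omega)
  have h_lt : a ^ (i + 1) < a ^ (i + 1) := calc
    a ^ (i + 1) ≤ max C 0 * a ^ (k + 1) :=
      weight_le_mul_of_weightedSup_map_le h_bdd hA (le_max_right C 0) h_contr
        (by positivity) h_supp h_ne
    _ < a ^ m * a ^ (k + 1) :=
      mul_lt_mul_of_pos_right (max_lt hCm (by positivity)) (by positivity)
    _ = a ^ (m + (k + 1)) := (pow_add a m (k + 1)).symm
    _ ≤ a ^ (i + 1) := pow_le_pow_of_le_one ha₀.le ha₁ (by omega)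
  exact h_lt.false

end WeightedSup

/-- Linear contractions of `ℝ^ℕ` shift the canonical filtration.
Equip `ℝ^ℕ` (sequences indexed from `0`, representing `(x₁,x₂,…)`) with
`‖x‖_d := ⨆ n, a^(n+1)·|xₙ|/(1+|xₙ|)` for a fixed `a ∈ (0,1)`.  Let
`Fset k := {x : ∀ i < k, xᵢ = 0}` (so `Fset (n-1)` is the paper's `Fₙ`).  If
`A` is linear with all `‖A x‖_d ≤ C·‖x‖_d` and `C < 1`, then `A` maps `Fset k`
into `Fset (k+1)` for every `k`; more generally if `ℓ ≥ 1` and `C < a^(ℓ-1)`,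
then `A` maps `Fset k` into `Fset (k+ℓ)` for every `k`. -/
theorem stmt12
    (a : ℝ) (ha0 : 0 < a) (ha1 : a < 1)
    (A : (ℕ → ℝ) →ₗ[ℝ] (ℕ → ℝ)) (C : ℝ)
    (hC : ∀ x : ℕ → ℝ,
      (⨆ n : ℕ, a ^ (n + 1) * (|A x n| / (1 + |A x n|))) ≤
        C * ⨆ n : ℕ, a ^ (n + 1) * (|x n| / (1 + |x n|))) :
    (C < 1 → ∀ k : ℕ, ∀ x : ℕ → ℝ, (∀ i < k, x i = 0) → ∀ i < k + 1, A x i = 0) ∧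
    (∀ l : ℕ, 1 ≤ l → C < a ^ (l - 1) →
      ∀ k : ℕ, ∀ x : ℕ → ℝ, (∀ i < k, x i = 0) → ∀ i < k + l, A x i = 0) :=
  ⟨fun h _ _ hx => stmt12_general ha0 ha1.le (map_nsmul A) hC (m := 0) (by rwa [pow_zero]) hx,
    fun _ _ h _ _ hx i hi => stmt12_general ha0 ha1.le (map_nsmul A) hC h hx i (by omega)⟩
end
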